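/- The following series identity holds: (2/π)⁶ · Σ_{k=0}^∞ Σ_{l=0}^∞ 1 / ( (2k+1)² (2l+1)² ((2k+1)² + (2l+1)²) ) = 1/12 − (31/(2π⁵)) · ζ(5) + (2/π)⁵ · Σ_{k=0}^∞ 1 / ( (2k+1)⁵ (e^{(2k+1)π} + 1) ), where ζ(5) = Σ_{n=1}^∞ 1/n⁵ is the Riemann zeta function at 5. In particular, all series appearing in this identity converge. -/

import Mathlib

/-!
Write `a = 2k+1`. By partial fractions and the expansion `Σ_{m odd} 1/(a² + m²) = π tanh(aπ/2)/(4a)`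
(a consequence of the Mittag-Leffler series of the cotangent), the inner sum over `l` equals
`π²/(8 a⁴) - π/(4 a⁵) + π/(2 a⁵ (e^{aπ} + 1))`; see `hasSum_inner_series`. Summing over odd `a` with
`Σ a⁻⁴ = (15/16) ζ(4) = π⁴/96` and `Σ a⁻⁵ = (31/32) ζ(5)` and multiplying by `(2/π)⁶` gives the claim.
-/

open Real

theorem hasSum_odd_of_even {f : ℕ → ℝ} {s t : ℝ} (hf : HasSum f s)
    (he : HasSum (fun n : ℕ => f (2 * n)) t) : HasSum (fun n : ℕ => f (2 * n + 1)) (s - t) := by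
  have ho : Summable (fun n : ℕ => f (2 * n + 1)) :=
    hf.summable.comp_injective (i := fun n : ℕ => 2 * n + 1) (fun a b h => by simpa using h)
  have := (he.even_add_odd ho.hasSum).unique hf
  rw [← this, add_sub_cancel_left]
  exact ho.hasSum

/-- The odd part of the zeta series: `Σ 1/(2k+1)^p = (1 - 2^{-p}) ζ(p)`. The `n = 0` term on the
right is `1 / 0 = 0`. -/
theorem hasSum_one_div_odd_pow {p : ℕ} (hp : 1 < p) : HasSum (fun k : ℕ => 1 / (2 * (k:ℝ) + 1) ^ p)
    ((1 - 1 / 2 ^ p) * ∑' n : ℕ, 1 / (n:ℝ) ^ p) := by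
  have hf := (Real.summable_one_div_nat_pow.mpr hp).hasSum
  have he : HasSum (fun n : ℕ => 1 / (((2 * n : ℕ) : ℝ)) ^ p)
      (1 / 2 ^ p * ∑' n : ℕ, 1 / (n:ℝ) ^ p) := by
    convert! hf.mul_left (1 / 2 ^ p : ℝ) using 2 with n
    push_cast
    rw [mul_pow, one_div_mul_one_div]
  convert! hasSum_odd_of_even hf he using 1
  · ext k; push_cast; rfl
  · ring

/-- The partial fraction expansion of `coth`, read off from that of `cot` at the imaginary
argument `i x`. The sum includes `n = 0`, which accounts for the sign of `1 / (2 x ^ 2)`. -/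
theorem hasSum_one_div_sq_add_sq {x : ℝ} (hx : 0 < x) :
    HasSum (fun n : ℕ => 1 / (x ^ 2 + (n:ℝ) ^ 2))
      (π / (2 * x) * (cosh (π * x) / sinh (π * x)) + 1 / (2 * x ^ 2)) := by
  have hsum : Summable (fun n : ℕ => 1 / (x ^ 2 + (n:ℝ) ^ 2)) := by
    rw [← summable_nat_add_iff 1]
    refine Summable.of_nonneg_of_le (fun n => by positivity) (fun n => ?_)
      ((summable_nat_add_iff 1).mpr (Real.summable_one_div_nat_pow.mpr (one_lt_two)))
    gcongr
    nlinarith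
  have h := cot_series_rep' (x := (x : ℂ) * Complex.I)
    (UpperHalfPlane.coe_mem_integerComplement ⟨(x : ℂ) * Complex.I, by simpa using hx⟩)
  have hs : Real.sinh (π * x) ≠ 0 := (Real.sinh_pos_iff.mpr (by positivity)).ne'
  have hcot : Complex.cot (π * ((x:ℂ) * Complex.I)) =
      -Complex.I * ((Real.cosh (π * x) / Real.sinh (π * x) : ℝ) : ℂ) := by
    rw [Complex.cot, ← mul_assoc, Complex.cos_mul_I, Complex.sin_mul_I]
    have : Complex.sinh (π * x) ≠ 0 := by exact_mod_cast hs
    push_cast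
    field_simp
    simp
  have hterm : ∀ n : ℕ, (1 / ((x:ℂ) * Complex.I - (n + 1)) + 1 / ((x:ℂ) * Complex.I + (n + 1)))
      = -Complex.I * ((2 * x * (1 / (x ^ 2 + ((n + 1 : ℕ):ℝ) ^ 2)) : ℝ) : ℂ) := by
    intro n
    have h1 : (x:ℂ) * Complex.I - (n + 1) ≠ 0 := fun h => by
      have := congrArg Complex.im h; simp at this; exact hx.ne' this
    have h2 : (x:ℂ) * Complex.I + (n + 1) ≠ 0 := fun h => by
      have := congrArg Complex.im h; simp at this; exact hx.ne' this
    have h3 : (x:ℂ) ^ 2 + ((n:ℂ) + 1) ^ 2 ≠ 0 := by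
      have : x ^ 2 + ((n:ℝ) + 1) ^ 2 ≠ 0 := by positivity
      exact_mod_cast this
    push_cast
    field_simp
    ring_nf
    simp only [show Complex.I ^ 3 = -Complex.I by simp]
    ring
  simp_rw [hterm] at h
  rw [tsum_mul_left, hcot, ← Complex.ofReal_tsum, tsum_mul_left] at h
  have hxc : (x:ℂ) ≠ 0 := by exact_mod_cast hx.ne'
  have h' : π * (cosh (π * x) / sinh (π * x)) - 1 / x
      = 2 * x * ∑' n : ℕ, 1 / (x ^ 2 + ((n + 1 : ℕ):ℝ) ^ 2) := by
    have h4 : -Complex.I * ((π * (cosh (π * x) / sinh (π * x)) - 1 / x : ℝ) : ℂ)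
      = -Complex.I * ((2 * x * ∑' n : ℕ, 1 / (x ^ 2 + ((n + 1 : ℕ):ℝ) ^ 2) : ℝ) : ℂ) := by
      rw [← h]
      push_cast
      rw [one_div ((x:ℂ) * _), mul_inv, Complex.inv_I]
      ring
    exact_mod_cast mul_left_cancel₀ (neg_ne_zero.mpr Complex.I_ne_zero) h4
  convert! hsum.hasSum using 1
  rw [hsum.tsum_eq_zero_add]
  have h5 : ∑' n : ℕ, 1 / (x ^ 2 + ((n + 1 : ℕ):ℝ) ^ 2)
    = (π * (cosh (π * x) / sinh (π * x)) - 1 / x) / (2 * x) := by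
    rw [h']; field_simp
  rw [h5]
  field_simp
  simp
  ring

/-- The partial fraction expansion of `tanh`, with `tanh (a π / 2)` written as
`1 - 2 / (e ^ (a π) + 1)`. The even terms of the `coth` series at `a` are a quarter of the
`coth` series at `a / 2`, and `2 coth (2 y) - coth y = tanh y`. -/
theorem hasSum_one_div_sq_add_odd_sq {a : ℝ} (ha : 0 < a) :
    HasSum (fun l : ℕ => 1 / (a ^ 2 + (2 * (l:ℝ) + 1) ^ 2))
      (π / (4 * a) * (1 - 2 / (Real.exp (a * π) + 1))) := by
  have h1 := hasSum_one_div_sq_add_sq ha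
  have h2 := (hasSum_one_div_sq_add_sq (half_pos ha)).mul_left (1 / 4)
  have h3 : (fun n : ℕ => 1 / 4 * (1 / ((a / 2) ^ 2 + (n:ℝ) ^ 2)))
      = fun n : ℕ => 1 / (a ^ 2 + ((2 * n : ℕ):ℝ) ^ 2) := by
    ext n
    push_cast
    rw [one_div_mul_one_div]
    congr 1; ring
  rw [h3] at h2
  have h4 := hasSum_odd_of_even h1 h2
  convert! h4 using 1
  · ext l; push_cast; rfl
  · have e1 : 1 < Real.exp (π * (a / 2)) := Real.one_lt_exp_iff.mpr (by positivity)
    have e2 : Real.exp (π * a) = Real.exp (π * (a / 2)) ^ 2 := by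
      rw [← Real.exp_nat_mul]; congr 1; push_cast; ring
    rw [Real.cosh_eq, Real.sinh_eq, Real.cosh_eq, Real.sinh_eq, Real.exp_neg, Real.exp_neg,
      mul_comm a π, e2]
    set E := Real.exp (π * (a / 2))
    have n0 : E ≠ 0 := by positivity
    have n1 : E ^ 2 - 1 ≠ 0 := by nlinarith
    have n2 : E ^ 2 + 1 ≠ 0 := by positivity
    have n3 : E - E⁻¹ = (E ^ 2 - 1) / E := by field_simp
    have n4 : E ^ 2 - (E ^ 2)⁻¹ = (E ^ 2 - 1) * (E ^ 2 + 1) / E ^ 2 := by field_simp; ring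
    rw [n3, n4]
    field_simp
    ring

/-- The inner sum in closed form. With `a = 2k+1` and `m = 2l+1`, the partial fraction
`1/(a² m² (a² + m²)) = a⁻⁴ (1/m² - 1/(a² + m²))` reduces it to `ζ(2)` and the `tanh` series. -/
theorem hasSum_inner_series (k : ℕ) : HasSum (fun l : ℕ =>
      1 / ((2 * (k:ℝ) + 1) ^ 2 * (2 * (l:ℝ) + 1) ^ 2
        * ((2 * (k:ℝ) + 1) ^ 2 + (2 * (l:ℝ) + 1) ^ 2)))
    (π ^ 2 / 8 * (1 / (2 * (k:ℝ) + 1) ^ 4) - π / 4 * (1 / (2 * (k:ℝ) + 1) ^ 5)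
      + π / 2 * (1 / ((2 * (k:ℝ) + 1) ^ 5 * (Real.exp ((2 * (k:ℝ) + 1) * π) + 1)))) := by
  have ha : 0 < 2 * (k:ℝ) + 1 := by positivity
  have h2 := hasSum_one_div_odd_pow one_lt_two
  rw [hasSum_zeta_two.tsum_eq] at h2
  have h := (h2.sub (hasSum_one_div_sq_add_odd_sq ha)).mul_left (1 / (2 * (k:ℝ) + 1) ^ 4)
  have hE : 0 < Real.exp ((2 * (k:ℝ) + 1) * π) + 1 := by positivity
  convert! h using 1
  · ext l; field_simp; ring
  · field_simp; ring

/-- **Closed-form evaluation of the mean-value goal functional for the Poisson problem on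
the unit square.**
`(2/π)⁶ Σ_k Σ_l 1/((2k+1)²(2l+1)²((2k+1)²+(2l+1)²))
  = 1/12 − (31/(2π⁵))ζ(5) + (2/π)⁵ Σ_k 1/((2k+1)⁵(e^{(2k+1)π}+1))`,
where `ζ(5) = Σ_{n=1}^∞ 1/n⁵`; in particular, all series appearing converge. -/
theorem poisson_mean_value_series :
    (∀ k : ℕ, Summable fun l : ℕ =>
      1 / ((2 * (k:ℝ) + 1) ^ 2 * (2 * (l:ℝ) + 1) ^ 2
        * ((2 * (k:ℝ) + 1) ^ 2 + (2 * (l:ℝ) + 1) ^ 2))) ∧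
    (Summable fun k : ℕ => ∑' l : ℕ,
      1 / ((2 * (k:ℝ) + 1) ^ 2 * (2 * (l:ℝ) + 1) ^ 2
        * ((2 * (k:ℝ) + 1) ^ 2 + (2 * (l:ℝ) + 1) ^ 2))) ∧
    (Summable fun n : ℕ => 1 / ((n:ℝ) + 1) ^ 5) ∧
    (Summable fun k : ℕ =>
      1 / ((2 * (k:ℝ) + 1) ^ 5 * (Real.exp ((2 * (k:ℝ) + 1) * π) + 1))) ∧
    (2 / π) ^ 6 * ∑' k : ℕ, ∑' l : ℕ,
        1 / ((2 * (k:ℝ) + 1) ^ 2 * (2 * (l:ℝ) + 1) ^ 2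
          * ((2 * (k:ℝ) + 1) ^ 2 + (2 * (l:ℝ) + 1) ^ 2))
      = 1 / 12 - (31 / (2 * π ^ 5)) * (∑' n : ℕ, 1 / ((n:ℝ) + 1) ^ 5)
        + (2 / π) ^ 5 * ∑' k : ℕ,
            1 / ((2 * (k:ℝ) + 1) ^ 5 * (Real.exp ((2 * (k:ℝ) + 1) * π) + 1)) := by
  have hI := hasSum_inner_series
  have h4 := hasSum_one_div_odd_pow (p := 4) (by norm_num)
  rw [hasSum_zeta_four.tsum_eq] at h4
  have h5 := hasSum_one_div_odd_pow (p := 5) (by norm_num)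
  have hz : Summable (fun n : ℕ => 1 / (n:ℝ) ^ 5) :=
    Real.summable_one_div_nat_pow.mpr (by norm_num)
  have hz1 : Summable (fun n : ℕ => 1 / ((n:ℝ) + 1) ^ 5) := by
    simpa using (summable_nat_add_iff 1).mpr hz
  have hz2 : ∑' n : ℕ, 1 / (n:ℝ) ^ 5 = ∑' n : ℕ, 1 / ((n:ℝ) + 1) ^ 5 := by
    rw [hz.tsum_eq_zero_add]
    simp
  rw [hz2] at h5
  have hE : Summable fun k : ℕ =>
      1 / ((2 * (k:ℝ) + 1) ^ 5 * (Real.exp ((2 * (k:ℝ) + 1) * π) + 1)) := by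
    refine Summable.of_nonneg_of_le (fun k => by positivity) (fun k => ?_) h5.summable
    gcongr
    exact le_mul_of_one_le_right (by positivity) (by linarith [Real.exp_pos ((2 * (k:ℝ) + 1) * π)])
  have hO := ((h4.mul_left (π ^ 2 / 8)).sub (h5.mul_left (π / 4))).add (hE.hasSum.mul_left (π / 2))
  simp_rw [fun k => (hI k).tsum_eq]
  refine ⟨fun k => (hI k).summable, hO.summable, hz1, hE, ?_⟩
  rw [hO.tsum_eq]
  field_simp
  ring
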